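/- Existence and uniqueness of exterior harmonic maps with prescribed asymptotics: for ℓ ∈ N, n ∈ N, and any α ∈ R, there exists a unique solution Q on [1,∞) of the ODE Q'' + (2/r) Q' = (ℓ(ℓ+1)/(2r²)) sin(2Q) satisfying Q(r) = nπ − α/r^{ℓ+1} + O(r^{−3(ℓ+1)}) as r → ∞, where the error term is uniquely determined by α and vanishes when α = 0. -/

import Mathlib

open Asymptotics Filter
open scoped Topology

/-- A function on `(0, 1)` with nonnegative second derivative which is `o(x)` at `0` is
nonnegative. -/
theorem nonneg_of_deriv2_nonneg_of_isLittleO {f f' f'' : ℝ → ℝ}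
    (hf : ∀ x ∈ Set.Ioo (0 : ℝ) 1, HasDerivAt f (f' x) x)
    (hf' : ∀ x ∈ Set.Ioo (0 : ℝ) 1, HasDerivAt f' (f'' x) x)
    (hf'' : ∀ x ∈ Set.Ioo (0 : ℝ) 1, 0 ≤ f'' x)
    (ho : f =o[𝓝[>] 0] fun x => x) {x : ℝ} (hx : x ∈ Set.Ioo (0 : ℝ) 1) : 0 ≤ f x := by
  have hconv : ConvexOn ℝ (Set.Ioo (0 : ℝ) 1) f := by
    refine convexOn_of_hasDerivWithinAt2_nonneg (f' := f') (f'' := f'') (convex_Ioo 0 1)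
      (fun y hy => (hf y hy).continuousAt.continuousWithinAt) ?_ ?_ ?_ <;>
      rw [interior_Ioo]
    · exact fun y hy => (hf y hy).hasDerivWithinAt
    · exact fun y hy => (hf' y hy).hasDerivWithinAt
    · exact hf''
  have hlim : Tendsto (fun t => f t / t) (𝓝[>] 0) (𝓝 0) := ho.tendsto_div_nhds_zero
  have hid : Tendsto (fun t : ℝ => t) (𝓝[>] 0) (𝓝 0) :=
    tendsto_nhdsWithin_of_tendsto_nhds tendsto_id
  have hhalf : Tendsto (fun t : ℝ => t / 2) (𝓝[>] 0) (𝓝[>] 0) := by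
    refine tendsto_nhdsWithin_iff.2 ⟨by simpa using hid.div_const 2, ?_⟩
    filter_upwards [self_mem_nhdsWithin] with t ht
    exact half_pos (Set.mem_Ioi.1 ht)
  have hf0 : Tendsto f (𝓝[>] 0) (𝓝 0) := by
    have := hlim.mul hid
    rw [zero_mul] at this
    refine this.congr' ?_
    filter_upwards [self_mem_nhdsWithin] with t ht
    exact div_mul_cancel₀ _ (ne_of_gt ht)
  have hleft : Tendsto (fun t => 2 * (f t / t) - f (t / 2) / (t / 2)) (𝓝[>] 0) (𝓝 0) := by
    simpa using (hlim.const_mul 2).sub (hlim.comp hhalf)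
  have hright : Tendsto (fun t => (f x - f t) / (x - t)) (𝓝[>] 0) (𝓝 (f x / x)) := by
    simpa [Pi.div_def] using
      (hf0.const_sub (f x)).div (hid.const_sub x) (by simpa using hx.1.ne')
  have hle : 0 ≤ f x / x := by
    refine le_of_tendsto_of_tendsto hleft hright ?_
    filter_upwards [Ioo_mem_nhdsGT hx.1] with t ht
    have h := hconv.slope_mono_adjacent (x := t / 2) (y := t) (z := x)
      ⟨half_pos ht.1, by linarith [ht.2, hx.2]⟩ hx (half_lt_self ht.1) ht.2
    have ht0 := ht.1.ne'
    calc 2 * (f t / t) - f (t / 2) / (t / 2) = (f t - f (t / 2)) / (t - t / 2) := by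
          field_simp; ring
      _ ≤ _ := h
  have := mul_nonneg hle hx.1.le
  rwa [div_mul_cancel₀ _ hx.1.ne'] at this

/-- Integrating `|d''| ≤ C x ^ p` twice from `0`, where `d = o(x)`. -/
theorem abs_le_of_abs_deriv2_le {d d' d'' : ℝ → ℝ} {C : ℝ} {p : ℕ}
    (hd : ∀ x ∈ Set.Ioo (0 : ℝ) 1, HasDerivAt d (d' x) x)
    (hd' : ∀ x ∈ Set.Ioo (0 : ℝ) 1, HasDerivAt d' (d'' x) x)
    (hd'' : ∀ x ∈ Set.Ioo (0 : ℝ) 1, |d'' x| ≤ C * x ^ p)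
    (ho : d =o[𝓝[>] 0] fun x => x) {x : ℝ} (hx : x ∈ Set.Ioo (0 : ℝ) 1) :
    |d x| ≤ C / ((p + 1) * (p + 2)) * x ^ (p + 2) := by
  have hpow (a : ℝ) : (fun x : ℝ => a * x ^ (p + 2)) =o[𝓝[>] 0] fun x => x := by
    refine IsLittleO.const_mul_left ?_ a
    have := (isLittleO_pow_pow (𝕜 := ℝ) (show 1 < p + 2 by omega)).mono
      (nhdsWithin_le_nhds (s := Set.Ioi 0))
    simpa using this
  have key (σ : ℝ) (hσ : |σ| = 1) :
      0 ≤ C / ((p + 1) * (p + 2)) * x ^ (p + 2) + σ * d x := by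
    refine nonneg_of_deriv2_nonneg_of_isLittleO
      (f := fun x => C / ((p + 1) * (p + 2)) * x ^ (p + 2) + σ * d x)
      (f' := fun x => C / (p + 1) * x ^ (p + 1) + σ * d' x)
      (f'' := fun x => C * x ^ p + σ * d'' x) ?_ ?_ ?_ ?_ hx
    · intro y hy
      refine (((hasDerivAt_pow (p + 2) y).const_mul (C / ((p + 1) * (p + 2)))).add
        ((hd y hy).const_mul σ)).congr_deriv ?_
      push_cast
      field_simp
    · intro y hy
      refine (((hasDerivAt_pow (p + 1) y).const_mul (C / (p + 1))).add
        ((hd' y hy).const_mul σ)).congr_deriv ?_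
      push_cast
      field_simp
    · intro y hy
      have h1 : |σ * d'' y| ≤ C * y ^ p := by
        rw [abs_mul, hσ, one_mul]
        exact hd'' y hy
      linarith [neg_abs_le (σ * d'' y)]
    · exact (hpow _).add (ho.const_mul_left σ)
  have h1 := key 1 (by simp)
  have h2 := key (-1) (by simp)
  exact abs_le.2 ⟨by linarith, by linarith⟩

/-- A solution of `x ^ 2 |d''| ≤ c |d|` on `(0, 1)` vanishes if it is `O(x ^ q)` with
`c < q (q - 1)`; here `q = p + 2`. -/
theorem eqOn_zero_of_abs_deriv2_le {d d' d'' : ℝ → ℝ} {c M : ℝ} {p : ℕ}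
    (hd : ∀ x ∈ Set.Ioo (0 : ℝ) 1, HasDerivAt d (d' x) x)
    (hd' : ∀ x ∈ Set.Ioo (0 : ℝ) 1, HasDerivAt d' (d'' x) x)
    (hd'' : ∀ x ∈ Set.Ioo (0 : ℝ) 1, x ^ 2 * |d'' x| ≤ c * |d x|)
    (hc : 0 ≤ c) (hcp : c < (p + 1) * (p + 2))
    (hM : ∀ x ∈ Set.Ioo (0 : ℝ) 1, |d x| ≤ M * x ^ (p + 2)) :
    ∀ x ∈ Set.Ioo (0 : ℝ) 1, d x = 0 := by
  have ho : d =o[𝓝[>] 0] fun x => x := by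
    have hO : d =O[𝓝[>] 0] fun x : ℝ => x ^ (p + 2) := by
      refine IsBigO.of_bound M ?_
      filter_upwards [Ioo_mem_nhdsGT one_pos] with x hx
      rw [Real.norm_eq_abs, Real.norm_eq_abs, abs_of_nonneg (pow_nonneg hx.1.le _)]
      exact hM x hx
    refine hO.trans_isLittleO ?_
    have := (isLittleO_pow_pow (𝕜 := ℝ) (show 1 < p + 2 by omega)).mono
      (nhdsWithin_le_nhds (s := Set.Ioi 0))
    simpa using this
  set θ : ℝ := c / ((p + 1) * (p + 2)) with hθ
  have hθ0 : 0 ≤ θ := by positivity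
  have hθ1 : θ < 1 := (div_lt_one (by positivity)).2 hcp
  have iter (k : ℕ) : ∀ x ∈ Set.Ioo (0 : ℝ) 1, |d x| ≤ M * θ ^ k * x ^ (p + 2) := by
    induction k with
    | zero => simpa using hM
    | succ k ih =>
      intro x hx
      have := abs_le_of_abs_deriv2_le (C := c * (M * θ ^ k)) (p := p) hd hd' (fun y hy => ?_) ho hx
      · calc |d x| ≤ _ := this
          _ = M * θ ^ (k + 1) * x ^ (p + 2) := by rw [pow_succ, hθ]; ring
      · have h1 := (hd'' y hy).trans (mul_le_mul_of_nonneg_left (ih y hy) hc)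
        have hy2 : 0 < y ^ 2 := pow_pos hy.1 2
        refine le_of_mul_le_mul_left (h1.trans_eq ?_) hy2
        ring
  intro x hx
  have hlim : Tendsto (fun k : ℕ => M * θ ^ k * x ^ (p + 2)) atTop (𝓝 0) := by
    simpa using ((tendsto_pow_atTop_nhds_zero_of_lt_one hθ0 hθ1).const_mul M).mul_const
      (x ^ (p + 2))
  exact abs_eq_zero.1 (le_antisymm (ge_of_tendsto' hlim fun k => iter k x hx) (abs_nonneg _))

/-- The part of `(c / 2) sin (2 z)` beyond its linearization at `0`. -/
noncomputable def sineRemainder (c z : ℝ) : ℝ := c / 2 * (Real.sin (2 * z) - 2 * z)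

theorem hasDerivAt_sineRemainder (c z : ℝ) :
    HasDerivAt (sineRemainder c) (-(2 * c) * Real.sin z ^ 2) z := by
  have h : HasDerivAt (fun z : ℝ => 2 * z) 2 z := by
    simpa using (hasDerivAt_id z).const_mul 2
  refine ((h.sin.sub h).const_mul (c / 2)).congr_deriv ?_
  rw [Real.sin_sq_eq_half_sub]
  ring

theorem abs_sineRemainder_sub_le {c R B a b : ℝ} (hc : 0 ≤ c) (hB : 1 ≤ B ∨ R ^ 2 ≤ B)
    (ha : |a| ≤ R) (hb : |b| ≤ R) :
    |sineRemainder c a - sineRemainder c b| ≤ 2 * c * B * |a - b| := by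
  refine (convex_Icc (-R) R).norm_image_sub_le_of_norm_hasDerivWithin_le
    (fun z _ => (hasDerivAt_sineRemainder c z).hasDerivWithinAt) (fun z hz => ?_)
    (abs_le.1 hb) (abs_le.1 ha)
  rw [norm_mul, norm_neg, Real.norm_of_nonneg (by positivity : 0 ≤ 2 * c),
    Real.norm_of_nonneg (sq_nonneg _)]
  refine mul_le_mul_of_nonneg_left ?_ (by positivity)
  rcases hB with h | h
  · exact (Real.sin_sq_le_one z).trans h
  · refine le_trans ?_ h
    rw [← sq_abs (Real.sin z)]
    exact pow_le_pow_left₀ (abs_nonneg _) (Real.abs_sin_le_abs.trans (abs_le.2 hz)) 2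

/-- The nonlinear term in the equation for `w`, where `x ^ (ℓ + 1) * w x` solves
`ψ'' = c / (2 x ^ 2) * sin (2 ψ)`. -/
noncomputable def sourceTerm (c : ℝ) (ℓ : ℕ) (y w : ℝ) : ℝ :=
  sineRemainder c (y ^ (ℓ + 1) * w) / y ^ (ℓ + 2)

theorem abs_sourceTerm_sub_le_div {c : ℝ} (hc : 0 ≤ c) (ℓ : ℕ) (y a b : ℝ) :
    |sourceTerm c ℓ y a - sourceTerm c ℓ y b| ≤ 2 * c / |y| * |a - b| := by
  rcases eq_or_ne y 0 with rfl | hy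
  · simp [sourceTerm]
  have hy' : 0 < |y| := abs_pos.2 hy
  rw [sourceTerm, sourceTerm, ← sub_div, abs_div, abs_pow, div_le_iff₀ (by positivity)]
  refine (abs_sineRemainder_sub_le hc (Or.inl le_rfl) (le_max_left _ _) (le_max_right _ _)).trans_eq
    ?_
  rw [← mul_sub, abs_mul, abs_pow]
  field_simp
  ring

theorem abs_sourceTerm_sub_le_pow {c : ℝ} (hc : 0 ≤ c) (ℓ : ℕ) {y a b R : ℝ}
    (ha : |a| ≤ R) (hb : |b| ≤ R) :
    |sourceTerm c ℓ y a - sourceTerm c ℓ y b| ≤ 2 * c * |y| ^ (2 * ℓ + 1) * R ^ 2 * |a - b| := by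
  have hR : 0 ≤ R := (abs_nonneg a).trans ha
  rcases eq_or_ne y 0 with rfl | hy
  · simp [sourceTerm]
  have hy' : 0 < |y| := abs_pos.2 hy
  rw [sourceTerm, sourceTerm, ← sub_div, abs_div, abs_pow, div_le_iff₀ (by positivity)]
  have bound {t : ℝ} (ht : |t| ≤ R) : |y ^ (ℓ + 1) * t| ≤ |y| ^ (ℓ + 1) * R := by
    rw [abs_mul, abs_pow]
    gcongr
  refine (abs_sineRemainder_sub_le hc (Or.inr le_rfl) (bound ha) (bound hb)).trans_eq ?_
  rw [← mul_sub, abs_mul, abs_pow]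
  ring

theorem sourceTerm_zero_right (c : ℝ) (ℓ : ℕ) (y : ℝ) : sourceTerm c ℓ y 0 = 0 := by
  simp [sourceTerm, sineRemainder]

theorem abs_sourceTerm_le {c : ℝ} (hc : 0 ≤ c) (ℓ : ℕ) (y w : ℝ) :
    |sourceTerm c ℓ y w| ≤ 2 * c * |y| ^ (2 * ℓ + 1) * |w| ^ 3 := by
  have := abs_sourceTerm_sub_le_pow hc ℓ (y := y) (a := w) (b := 0) le_rfl (by simp)
  rw [sourceTerm_zero_right, sub_zero, sub_zero] at this
  exact this.trans_eq (by ring)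

theorem continuous_sourceTerm {c : ℝ} (hc : 0 ≤ c) (ℓ : ℕ) :
    Continuous fun p : ℝ × ℝ => sourceTerm c ℓ p.1 p.2 := by
  refine continuous_iff_continuousAt.2 fun ⟨y, w⟩ => ?_
  rcases eq_or_ne y 0 with rfl | hy
  · have h0 : sourceTerm c ℓ 0 w = 0 := by simp [sourceTerm]
    rw [ContinuousAt, h0]
    refine squeeze_zero_norm (fun p => abs_sourceTerm_le hc ℓ p.1 p.2) ?_
    have : Continuous fun p : ℝ × ℝ => 2 * c * |p.1| ^ (2 * ℓ + 1) * |p.2| ^ 3 := by fun_prop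
    simpa using this.tendsto (0, w)
  · unfold sourceTerm sineRemainder
    refine ContinuousAt.div (by fun_prop) (by fun_prop) (by simpa using hy)

theorem continuous_sourceTerm_comp {X : Type*} [TopologicalSpace X] {c : ℝ} (hc : 0 ≤ c) (ℓ : ℕ)
    {f g : X → ℝ} (hf : Continuous f) (hg : Continuous g) :
    Continuous fun x => sourceTerm c ℓ (f x) (g x) := by
  have h := (continuous_sourceTerm hc ℓ).comp (hf.prodMk hg)
  exact h

/-- The exponential weight `exp (K y)` turns the source term into a `K / 2`-Lipschitz one on the
region `|w| ≤ A exp (K y)`. -/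
theorem exists_weight {c A : ℝ} (hc : 0 < c) (ℓ : ℕ) :
    ∃ K : ℝ, 0 < K ∧ ∀ y a b : ℝ, 0 ≤ y → |a| ≤ A * Real.exp (K * y) →
      |b| ≤ A * Real.exp (K * y) →
      |sourceTerm c ℓ y a - sourceTerm c ℓ y b| ≤ K / 2 * |a - b| := by
  set K : ℝ := 4 * c * (1 + A ^ 2 * Real.exp (8 * c)) with hK
  have hK0 : 0 < K := by positivity
  refine ⟨K, hK0, fun y a b hy ha hb => ?_⟩
  rcases le_total (4 * c) (K * y) with h | h
  · have hy0 : 0 < y := by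
      by_contra hcon
      have : y = 0 := le_antisymm (not_lt.1 hcon) hy
      rw [this] at h
      linarith
    refine (abs_sourceTerm_sub_le_div hc.le ℓ y a b).trans ?_
    refine mul_le_mul_of_nonneg_right ?_ (abs_nonneg _)
    rw [abs_of_pos hy0, div_le_iff₀ hy0]
    linarith
  · have hy1 : y ≤ 1 := by
      have : 4 * c ≤ K := by
        rw [hK]
        exact le_mul_of_one_le_right (by positivity)
          (le_add_of_nonneg_right (by positivity))
      by_contra! hcon
      nlinarith
    refine (abs_sourceTerm_sub_le_pow hc.le ℓ ha hb).trans ?_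
    gcongr
    rw [abs_of_nonneg hy]
    have h1 : y ^ (2 * ℓ + 1) ≤ 1 := pow_le_one₀ hy hy1
    have h2 : (A * Real.exp (K * y)) ^ 2 ≤ A ^ 2 * Real.exp (8 * c) := by
      rw [mul_pow, ← Real.exp_nat_mul]
      refine mul_le_mul_of_nonneg_left (Real.exp_le_exp.2 ?_) (sq_nonneg A)
      push_cast
      linarith
    calc 2 * c * y ^ (2 * ℓ + 1) * (A * Real.exp (K * y)) ^ 2
        ≤ 2 * c * 1 * (A ^ 2 * Real.exp (8 * c)) := by gcongr
      _ ≤ K / 2 := by rw [hK]; linarith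

/-- The average `∫₀¹ τ ^ k g (z τ) dτ`, equal to `z ^ (-(k + 1)) ∫₀ᶻ y ^ k g y dy`. -/
noncomputable def powerAverage (k : ℕ) (g : ℝ → ℝ) (z : ℝ) : ℝ :=
  ∫ τ in (0 : ℝ)..1, τ ^ k * g (z * τ)

theorem continuous_powerAverage (k : ℕ) {g : ℝ → ℝ} (hg : Continuous g) :
    Continuous (powerAverage k g) :=
  intervalIntegral.continuous_parametric_intervalIntegral_of_continuous' (by fun_prop) 0 1

theorem abs_powerAverage_le (k : ℕ) {g : ℝ → ℝ} {z B : ℝ} (hz : 0 ≤ z)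
    (h : ∀ y ∈ Set.Icc 0 z, |g y| ≤ B) : |powerAverage k g z| ≤ B := by
  have := intervalIntegral.norm_integral_le_of_norm_le_const (a := (0 : ℝ)) (b := 1)
    (f := fun τ => τ ^ k * g (z * τ)) (C := B) fun τ hτ => ?_
  · simpa [powerAverage] using this
  · rw [Set.uIoc_of_le zero_le_one] at hτ
    rw [norm_mul, norm_pow, Real.norm_of_nonneg hτ.1.le]
    have h1 := h (z * τ) ⟨mul_nonneg hz hτ.1.le, mul_le_of_le_one_right hz hτ.2⟩
    exact (mul_le_of_le_one_left (norm_nonneg _) (pow_le_one₀ hτ.1.le hτ.2)).trans h1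

theorem powerAverage_sub (k : ℕ) {g h : ℝ → ℝ} (hg : Continuous g) (hh : Continuous h) (z : ℝ) :
    powerAverage k g z - powerAverage k h z = powerAverage k (fun y => g y - h y) z := by
  unfold powerAverage
  rw [← intervalIntegral.integral_sub (Continuous.intervalIntegrable (by fun_prop) _ _)
    (Continuous.intervalIntegrable (by fun_prop) _ _)]
  simp only [mul_sub]

theorem powerAverage_eq_integral_div (k : ℕ) (g : ℝ → ℝ) {z : ℝ} (hz : z ≠ 0) :
    powerAverage k g z = (∫ y in (0 : ℝ)..z, y ^ k * g y) / z ^ (k + 1) := by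
  have h := intervalIntegral.mul_integral_comp_mul_left (a := (0 : ℝ)) (b := 1)
    (f := fun y => y ^ k * g y) z
  rw [mul_zero, mul_one] at h
  rw [← h, powerAverage]
  simp only [mul_pow, mul_assoc, intervalIntegral.integral_const_mul]
  field_simp
  ring

theorem hasDerivAt_powerAverage (k : ℕ) {g : ℝ → ℝ} (hg : Continuous g) {z : ℝ} (hz : 0 < z) :
    HasDerivAt (powerAverage k g) ((g z - (k + 1) * powerAverage k g z) / z) z := by
  have hP : HasDerivAt (fun x => ∫ y in (0 : ℝ)..x, y ^ k * g y) (z ^ k * g z) z :=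
    (by fun_prop : Continuous fun y => y ^ k * g y).integral_hasStrictDerivAt 0 z |>.hasDerivAt
  have h := (hP.fun_div (hasDerivAt_pow (k + 1) z) (pow_ne_zero _ hz.ne')).congr_of_eventuallyEq
    (f₁ := powerAverage k g) (by
      filter_upwards [eventually_ne_nhds hz.ne'] with x hx using powerAverage_eq_integral_div k g hx)
  refine h.congr_deriv ?_
  rw [powerAverage_eq_integral_div k g hz.ne']
  push_cast
  field_simp
  ring

theorem abs_integral_le_of_abs_le_exp {h : ℝ → ℝ} {K D x : ℝ} (hx : 0 ≤ x)
    (hb : ∀ z, 0 ≤ z → |h z| ≤ K / 2 * Real.exp (K * z) * D) :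
    |∫ z in (0 : ℝ)..x, h z| ≤ D / 2 * (Real.exp (K * x) - 1) := by
  have hd (z : ℝ) :
      HasDerivAt (fun z => D / 2 * Real.exp (K * z)) (K / 2 * Real.exp (K * z) * D) z := by
    have h1 : HasDerivAt (fun z : ℝ => K * z) K z := by simpa using (hasDerivAt_id z).const_mul K
    exact (h1.exp.const_mul (D / 2)).congr_deriv (by ring)
  have hc : Continuous fun z => K / 2 * Real.exp (K * z) * D := by fun_prop
  have h1 := intervalIntegral.integral_eq_sub_of_hasDerivAt (a := 0) (b := x) (fun z _ => hd z)
    (hc.intervalIntegrable _ _)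
  have h2 := intervalIntegral.norm_integral_le_of_norm_le (μ := MeasureTheory.volume) (f := h) hx
    (Eventually.of_forall fun z hz => hb z (Set.Ioc_subset_Icc_self hz).1)
    (hc.intervalIntegrable 0 x)
  rw [h1] at h2
  refine h2.trans_eq ?_
  rw [mul_zero, Real.exp_zero]
  ring

/-- The right hand side of the Volterra equation, divided by the weight `exp (K x)` and extended
to negative `x` by a constant. -/
noncomputable def weightedVolterra (G : ℝ → ℝ → ℝ) (k : ℕ) (K α : ℝ) (u : ℝ → ℝ) (x : ℝ) : ℝ :=
  Real.exp (-(K * max x 0)) *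
    (-α + ∫ z in (0 : ℝ)..max x 0, powerAverage k (fun y => G y (u y)) z)

theorem exists_weightedVolterra_fixedPoint {G : ℝ → ℝ → ℝ} (k : ℕ) {K A α : ℝ} (hα : |α| ≤ A)
    (hK : 0 < K) (hG : Continuous fun p : ℝ × ℝ => G p.1 p.2)
    (hlip : ∀ y, 0 ≤ y → ∀ u v, |G y u - G y v| ≤ K / 2 * Real.exp (K * y) * |u - v|)
    (hbdd : ∀ y, 0 ≤ y → ∀ u, |G y u| ≤ K / 2 * Real.exp (K * y) * A) :
    ∃ u : ℝ → ℝ, Continuous u ∧ (∀ x, |u x| ≤ A) ∧ weightedVolterra G k K α u = u := by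
  have hA : 0 ≤ A := (abs_nonneg α).trans hα
  have hGu {u : ℝ → ℝ} (hu : Continuous u) : Continuous fun y => G y (u y) :=
    hG.comp (continuous_id.prodMk hu)
  have hmono {y z D : ℝ} (hyz : y ≤ z) (hD : 0 ≤ D) :
      K / 2 * Real.exp (K * y) * D ≤ K / 2 * Real.exp (K * z) * D := by gcongr
  have hcont {u : ℝ → ℝ} (hu : Continuous u) : Continuous (weightedVolterra G k K α u) := by
    have hI : Continuous fun x => ∫ z in (0 : ℝ)..x, powerAverage k (fun y => G y (u y)) z :=
      intervalIntegral.continuous_primitive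
        (fun a b => (continuous_powerAverage k (hGu hu)).intervalIntegrable a b) 0
    have := hI.comp (continuous_id.max (continuous_const (y := (0 : ℝ))))
    unfold weightedVolterra
    exact (by fun_prop : Continuous fun x : ℝ => Real.exp (-(K * max x 0))).mul
      (continuous_const.add this)
  have hexp (x : ℝ) : Real.exp (-(K * max x 0)) * Real.exp (K * max x 0) = 1 := by
    rw [← Real.exp_add, neg_add_cancel, Real.exp_zero]
  have hbound (u : ℝ → ℝ) (x : ℝ) : |weightedVolterra G k K α u x| ≤ A := by
    have hx : 0 ≤ max x 0 := le_max_right _ _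
    have h1 : |∫ z in (0 : ℝ)..max x 0, powerAverage k (fun y => G y (u y)) z| ≤
        A / 2 * (Real.exp (K * max x 0) - 1) :=
      abs_integral_le_of_abs_le_exp hx fun z hz => abs_powerAverage_le k hz fun y hy =>
        (hbdd y hy.1 _).trans (hmono hy.2 hA)
    have h2 : 1 ≤ Real.exp (K * max x 0) := Real.one_le_exp (by positivity)
    rw [weightedVolterra, abs_mul, Real.abs_exp]
    calc _ ≤ Real.exp (-(K * max x 0)) * (A * Real.exp (K * max x 0)) := by
          refine mul_le_mul_of_nonneg_left ?_ (Real.exp_pos _).le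
          refine (abs_add_le _ _).trans ?_
          rw [abs_neg]
          nlinarith
      _ = A := by rw [mul_left_comm, hexp, mul_one]
  let T : BoundedContinuousFunction ℝ ℝ → BoundedContinuousFunction ℝ ℝ := fun u =>
    BoundedContinuousFunction.ofNormedAddCommGroup (weightedVolterra G k K α u)
      (hcont u.continuous) A (hbound u)
  have hT : ContractingWith (1 / 2) T := by
    refine ⟨by rw [← NNReal.coe_lt_coe]; norm_num, LipschitzWith.of_dist_le_mul fun u v => ?_⟩
    refine (BoundedContinuousFunction.dist_le (by positivity)).2 fun x => ?_
    have hx : 0 ≤ max x 0 := le_max_right _ _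
    have hu := continuous_powerAverage k (hGu u.continuous)
    have hv := continuous_powerAverage k (hGu v.continuous)
    have h1 : |∫ z in (0 : ℝ)..max x 0, (powerAverage k (fun y => G y (u y)) z -
        powerAverage k (fun y => G y (v y)) z)| ≤
        dist u v / 2 * (Real.exp (K * max x 0) - 1) := by
      refine abs_integral_le_of_abs_le_exp hx fun z hz => ?_
      rw [powerAverage_sub k (hGu u.continuous) (hGu v.continuous)]
      refine abs_powerAverage_le k hz fun y hy =>
        ((hlip y hy.1 _ _).trans ?_).trans (hmono hy.2 dist_nonneg)
      refine mul_le_mul_of_nonneg_left ?_ (by positivity)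
      rw [← Real.dist_eq]
      exact BoundedContinuousFunction.dist_coe_le_dist y
    rw [intervalIntegral.integral_sub (hu.intervalIntegrable _ _) (hv.intervalIntegrable _ _)] at h1
    change |weightedVolterra G k K α u x - weightedVolterra G k K α v x| ≤ _
    rw [weightedVolterra, weightedVolterra, ← mul_sub, abs_mul, Real.abs_exp,
      add_sub_add_left_eq_sub]
    calc _ ≤ Real.exp (-(K * max x 0)) * (dist u v / 2 * Real.exp (K * max x 0)) := by
          refine mul_le_mul_of_nonneg_left (h1.trans ?_) (Real.exp_pos _).le
          nlinarith [dist_nonneg (x := u) (y := v)]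
      _ = dist u v / 2 := by rw [mul_left_comm, hexp, mul_one]
      _ = _ := by simp; ring
  let u := hT.fixedPoint T
  have hfix : weightedVolterra G k K α u = u :=
    congrArg (fun f : BoundedContinuousFunction ℝ ℝ => (f : ℝ → ℝ)) hT.fixedPoint_isFixedPt
  refine ⟨u, u.continuous, fun x => ?_, hfix⟩
  rw [← hfix]
  exact hbound u x

/-- Truncation of `u` to the interval `[-A, A]`. -/
noncomputable def truncate (A u : ℝ) : ℝ := max (-A) (min A u)

theorem continuous_truncate (A : ℝ) : Continuous (truncate A) := by
  unfold truncate
  fun_prop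

theorem abs_truncate_le {A : ℝ} (hA : 0 ≤ A) (u : ℝ) : |truncate A u| ≤ A :=
  abs_le.2 ⟨le_max_left _ _, max_le (by linarith) (min_le_left _ _)⟩

theorem abs_truncate_sub_le (A u v : ℝ) : |truncate A u - truncate A v| ≤ |u - v| := by
  refine (abs_max_sub_max_le_max _ _ _ _).trans ?_
  rw [sub_self, abs_zero, max_eq_right (abs_nonneg _)]
  refine (abs_min_sub_min_le_max _ _ _ _).trans ?_
  rw [sub_self, abs_zero, max_eq_right (abs_nonneg _)]

theorem truncate_eq {A u : ℝ} (hu : |u| ≤ A) : truncate A u = u := by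
  rw [truncate, min_eq_right (abs_le.1 hu).2, max_eq_right (abs_le.1 hu).1]

theorem abs_exp_mul_le {A u : ℝ} (hu : |u| ≤ A) (t : ℝ) :
    |Real.exp t * u| ≤ A * Real.exp t := by
  rw [abs_mul, Real.abs_exp, mul_comm]
  exact mul_le_mul_of_nonneg_right hu (Real.exp_pos _).le

theorem exists_profile_integral {c : ℝ} (hc : 0 < c) (ℓ : ℕ) (α : ℝ) :
    ∃ (W g : ℝ → ℝ) (K : ℝ), 0 < K ∧ Continuous g ∧
      (∀ x, 0 ≤ x → g x = sourceTerm c ℓ x (W x)) ∧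
      (∀ x, 0 ≤ x → |W x| ≤ |α| * Real.exp (K * x)) ∧
      ∀ x, W x = -α + ∫ z in (0 : ℝ)..x, powerAverage (2 * ℓ + 1) g z := by
  obtain ⟨K, hK, hlip⟩ := exists_weight (A := |α|) hc ℓ
  have hexp (y u : ℝ) : |Real.exp (K * y) * truncate |α| u| ≤ |α| * Real.exp (K * y) :=
    abs_exp_mul_le (abs_truncate_le (abs_nonneg α) u) _
  have hG : Continuous fun p : ℝ × ℝ =>
      sourceTerm c ℓ p.1 (Real.exp (K * p.1) * truncate |α| p.2) := by
    have := (continuous_truncate |α|).comp (continuous_snd (X := ℝ))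
    exact continuous_sourceTerm_comp hc.le ℓ continuous_fst
      ((by fun_prop : Continuous fun p : ℝ × ℝ => Real.exp (K * p.1)).mul this)
  obtain ⟨u, hu, huA, hfix⟩ := exists_weightedVolterra_fixedPoint
    (G := fun y u => sourceTerm c ℓ y (Real.exp (K * y) * truncate |α| u)) (2 * ℓ + 1)
    (α := α) le_rfl hK hG
    (fun y hy u v => by
      refine (hlip y _ _ hy (hexp y u) (hexp y v)).trans ?_
      rw [← mul_sub, abs_mul, Real.abs_exp, mul_assoc]
      exact mul_le_mul_of_nonneg_left (mul_le_mul_of_nonneg_left (abs_truncate_sub_le _ u v)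
        (Real.exp_pos _).le) (by positivity))
    (fun y hy u => by
      have := hlip y _ 0 hy (hexp y u) (by rw [abs_zero]; positivity)
      rw [sourceTerm_zero_right, sub_zero, sub_zero] at this
      refine this.trans ?_
      rw [mul_assoc, mul_comm (Real.exp _) |α|]
      exact mul_le_mul_of_nonneg_left (hexp y u) (by positivity))
  have hu_eq (y : ℝ) : truncate |α| (u y) = u y := truncate_eq (huA y)
  unfold weightedVolterra at hfix
  simp only [hu_eq] at hfix
  have hg : Continuous fun y => sourceTerm c ℓ y (Real.exp (K * y) * u y) :=
    continuous_sourceTerm_comp hc.le ℓ continuous_id (by fun_prop)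
  set H := powerAverage (2 * ℓ + 1) fun y => sourceTerm c ℓ y (Real.exp (K * y) * u y)
  have hW (x : ℝ) (hx : 0 ≤ x) : -α + ∫ z in (0 : ℝ)..x, H z = Real.exp (K * x) * u x := by
    rw [← congrFun hfix x, max_eq_left hx, ← mul_assoc, ← Real.exp_add, add_neg_cancel,
      Real.exp_zero, one_mul]
  refine ⟨fun x => -α + ∫ z in (0 : ℝ)..x, H z, _, K, hK, hg, fun x hx => ?_, fun x hx => ?_,
    fun x => rfl⟩
  · simp only [hW x hx]
  · simp only [hW x hx]
    exact abs_exp_mul_le (huA x) _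

/-- There is a profile `W` with `W 0 = -α` such that `x ^ (ℓ + 1) * W x` solves
`ψ'' = c / (2 x ^ 2) * sin (2 ψ)` when `c = ℓ (ℓ + 1)`. -/
theorem exists_profile {c : ℝ} (hc : 0 < c) (ℓ : ℕ) (α : ℝ) :
    ∃ (W H : ℝ → ℝ) (M : ℝ), (∀ x, HasDerivAt W (H x) x) ∧
      (∀ x, 0 < x → HasDerivAt H ((sourceTerm c ℓ x (W x) - (2 * ℓ + 2) * H x) / x) x) ∧
      (∀ x ∈ Set.Icc (0 : ℝ) 1, |W x + α| ≤ M * x ^ (2 * ℓ + 2)) ∧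
      (α = 0 → ∀ x, 0 ≤ x → W x = 0) := by
  obtain ⟨W, g, K, hK, hg, hgW, hWA, hW⟩ := exists_profile_integral hc ℓ α
  set H : ℝ → ℝ := powerAverage (2 * ℓ + 1) g
  have hHc : Continuous H := continuous_powerAverage _ hg
  refine ⟨W, H, 2 * c * (|α| * Real.exp K) ^ 3, fun x => ?_, fun x hx => ?_, fun x hx => ?_, ?_⟩
  · rw [funext hW]
    exact (hHc.integral_hasStrictDerivAt 0 x).hasDerivAt.const_add (-α)
  · refine (hasDerivAt_powerAverage (2 * ℓ + 1) hg hx).congr_deriv ?_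
    rw [hgW x hx.le]
    push_cast
    ring
  · have hHx (z : ℝ) (hz : z ∈ Set.uIoc 0 x) :
        ‖H z‖ ≤ 2 * c * (|α| * Real.exp K) ^ 3 * x ^ (2 * ℓ + 1) := by
      rw [Set.uIoc_of_le hx.1] at hz
      refine abs_powerAverage_le _ hz.1.le fun y hy => ?_
      rw [hgW y hy.1]
      refine (abs_sourceTerm_le hc.le ℓ y _).trans ?_
      have hy1 : y ≤ 1 := hy.2.trans (hz.2.trans hx.2)
      have h1 : |W y| ≤ |α| * Real.exp K := (hWA y hy.1).trans (by
        gcongr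
        exact mul_le_of_le_one_right hK.le hy1)
      have h2 : |y| ≤ x := by
        rw [abs_of_nonneg hy.1]
        exact hy.2.trans hz.2
      calc 2 * c * |y| ^ (2 * ℓ + 1) * |W y| ^ 3
          ≤ 2 * c * x ^ (2 * ℓ + 1) * (|α| * Real.exp K) ^ 3 := by
            have := hx.1
            gcongr
        _ = _ := by ring
    have h := intervalIntegral.norm_integral_le_of_norm_le_const hHx
    rw [sub_zero, abs_of_nonneg hx.1] at h
    rw [hW, neg_add_eq_sub, sub_add_cancel]
    exact h.trans_eq (by ring)
  · rintro rfl x hx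
    simpa using hWA x hx

theorem contDiffOn_two_of_hasDerivAt {f f' f'' : ℝ → ℝ} {s : Set ℝ} (hs : IsOpen s)
    (hf : ∀ x ∈ s, HasDerivAt f (f' x) x) (hf' : ∀ x ∈ s, HasDerivAt f' (f'' x) x)
    (hf'' : ContinuousOn f'' s) : ContDiffOn ℝ 2 f s := by
  have h1 : ContDiffOn ℝ 1 f' s := by
    rw [show (1 : WithTop ℕ∞) = 0 + 1 by norm_num, contDiffOn_succ_iff_deriv_of_isOpen hs]
    exact ⟨fun x hx => (hf' x hx).differentiableAt.differentiableWithinAt, by simp,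
      contDiffOn_zero.2 (hf''.congr fun x hx => (hf' x hx).deriv)⟩
  rw [show (2 : WithTop ℕ∞) = 1 + 1 by norm_num, contDiffOn_succ_iff_deriv_of_isOpen hs]
  exact ⟨fun x hx => (hf x hx).differentiableAt.differentiableWithinAt, by simp,
    h1.congr fun x hx => (hf x hx).deriv⟩

theorem HasDerivAt.comp_inv {f : ℝ → ℝ} {f' x : ℝ} (hf : HasDerivAt f f' x⁻¹) (hx : x ≠ 0) :
    HasDerivAt (fun x => f x⁻¹) (-f' / x ^ 2) x :=
  (HasDerivAt.comp x hf (hasDerivAt_inv hx)).congr_deriv (by ring)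

/-- Second derivative of `f ∘ (·)⁻¹`. -/
theorem HasDerivAt.deriv_comp_inv {f' : ℝ → ℝ} {f'' x : ℝ} (hf' : HasDerivAt f' f'' x⁻¹)
    (hx : x ≠ 0) :
    HasDerivAt (fun x => -f' x⁻¹ / x ^ 2) (f'' / x ^ 4 + 2 * f' x⁻¹ / x ^ 3) x := by
  refine ((hf'.comp_inv hx).fun_neg.fun_div (hasDerivAt_pow 2 x) (pow_ne_zero 2 hx)).congr_deriv ?_
  field_simp
  push_cast
  ring

/-- Existence of the solution of the exterior harmonic map equation in the inverted variable
`x = 1 / r`. -/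
theorem exists_inverted_solution {ℓ : ℕ} (hℓ : 0 < ℓ) (α : ℝ) :
    ∃ (ψ ψ' : ℝ → ℝ) (M : ℝ), (∀ x, 0 < x → HasDerivAt ψ (ψ' x) x) ∧
      (∀ x, 0 < x → HasDerivAt ψ' ((ℓ : ℝ) * (ℓ + 1) / 2 * Real.sin (2 * ψ x) / x ^ 2) x) ∧
      (∀ x ∈ Set.Icc (0 : ℝ) 1, |ψ x + α * x ^ (ℓ + 1)| ≤ M * x ^ (3 * (ℓ + 1))) ∧
      (α = 0 → ∀ x, 0 ≤ x → ψ x = 0) := by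
  obtain ⟨W, H, M, hW, hH, hM, h0⟩ :=
    exists_profile (c := (ℓ : ℝ) * (ℓ + 1)) (by positivity) ℓ α
  refine ⟨fun x => x ^ (ℓ + 1) * W x, fun x => (ℓ + 1) * (x ^ ℓ * W x) + x ^ (ℓ + 1) * H x, M,
    fun x _ => ?_, fun x hx => ?_, fun x hx => ?_, fun hα x hx => by simp [h0 hα x hx]⟩
  · refine ((hasDerivAt_pow (ℓ + 1) x).fun_mul (hW x)).congr_deriv ?_
    push_cast
    ring
  · refine ((((hasDerivAt_pow ℓ x).fun_mul (hW x)).const_mul ((ℓ : ℝ) + 1)).fun_add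
      ((hasDerivAt_pow (ℓ + 1) x).fun_mul (hH x hx))).congr_deriv ?_
    have hpow : x ^ (ℓ - 1) = x ^ ℓ / x := by
      rw [eq_div_iff hx.ne', ← pow_succ, Nat.sub_add_cancel hℓ]
    rw [hpow, sourceTerm, sineRemainder, Nat.add_sub_cancel]
    push_cast
    field_simp
    ring
  · rw [mul_comm α, ← mul_add, abs_mul, abs_of_nonneg (pow_nonneg hx.1 _)]
    calc x ^ (ℓ + 1) * |W x + α| ≤ x ^ (ℓ + 1) * (M * x ^ (2 * ℓ + 2)) :=
          mul_le_mul_of_nonneg_left (hM x hx) (pow_nonneg hx.1 _)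
      _ = _ := by ring

/-- A solution of the exterior harmonic map equation, in the inverted variable `x = 1 / r`. -/
theorem exists_hasDerivAt_comp_inv {Q : ℝ → ℝ} {ℓ : ℕ} (hQ : ContDiffOn ℝ 2 Q (Set.Ici 1))
    (hode : ∀ r : ℝ, 1 ≤ r → deriv (deriv Q) r + (2 / r) * deriv Q r =
      ((ℓ : ℝ) * ((ℓ : ℝ) + 1) / (2 * r ^ 2)) * Real.sin (2 * Q r)) :
    ∃ ψ' : ℝ → ℝ, ∀ x ∈ Set.Ioo (0 : ℝ) 1, HasDerivAt (fun x => Q x⁻¹) (ψ' x) x ∧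
      HasDerivAt ψ' ((ℓ : ℝ) * (ℓ + 1) / 2 * Real.sin (2 * Q x⁻¹) / x ^ 2) x := by
  refine ⟨fun x => -deriv Q x⁻¹ / x ^ 2, fun x hx => ?_⟩
  have hx1 : 1 < x⁻¹ := (one_lt_inv₀ hx.1).2 hx.2
  have hQ2 : ContDiffOn ℝ (1 + 1) Q (Set.Ioi 1) := by
    rw [one_add_one_eq_two]
    exact hQ.mono Set.Ioi_subset_Ici_self
  rw [contDiffOn_succ_iff_deriv_of_isOpen isOpen_Ioi] at hQ2
  have hnhds : Set.Ioi (1 : ℝ) ∈ 𝓝 x⁻¹ := Ioi_mem_nhds hx1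
  have hd := (hQ2.1.differentiableAt hnhds).hasDerivAt
  have hd' := ((hQ2.2.2.differentiableOn one_ne_zero).differentiableAt hnhds).hasDerivAt
  refine ⟨hd.comp_inv hx.1.ne', (hd'.deriv_comp_inv hx.1.ne').congr_deriv ?_⟩
  have h := hode x⁻¹ hx1.le
  rw [eq_sub_of_add_eq h]
  have := hx.1.ne'
  field_simp
  ring

theorem exists_bound_mul_pow_of_isBigO {D : ℝ → ℝ} {p : ℕ} (hD : ContinuousOn D (Set.Ici 1))
    (hO : D =O[atTop] fun r : ℝ => (r ^ p)⁻¹) : ∃ M, ∀ r, 1 ≤ r → |D r| ≤ M * (r ^ p)⁻¹ := by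
  obtain ⟨C, hC⟩ := hO.bound
  obtain ⟨R, hR⟩ := eventually_atTop.1 hC
  obtain ⟨B, hB⟩ := (isCompact_Icc (a := (1 : ℝ)) (b := R)).exists_bound_of_continuousOn
    (f := fun r => D r * r ^ p)
    ((hD.mono Set.Icc_subset_Ici_self).mul (continuous_pow p).continuousOn)
  refine ⟨max C B, fun r hr => ?_⟩
  have hr0 : 0 < r ^ p := by positivity
  rcases le_total R r with h | h
  · refine (hR r h).trans ?_
    rw [Real.norm_of_nonneg (inv_nonneg.2 hr0.le)]
    exact mul_le_mul_of_nonneg_right (le_max_left _ _) (inv_nonneg.2 hr0.le)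
  · have := hB r ⟨hr, h⟩
    rw [norm_mul, Real.norm_of_nonneg hr0.le] at this
    rw [← div_eq_mul_inv, le_div_iff₀ hr0]
    exact this.trans (le_max_right _ _)

theorem eqOn_of_exterior_equation {Q₁ Q₂ a : ℝ → ℝ} {ℓ : ℕ}
    (hQ₁ : ContDiffOn ℝ 2 Q₁ (Set.Ici 1)) (hQ₂ : ContDiffOn ℝ 2 Q₂ (Set.Ici 1))
    (hode₁ : ∀ r : ℝ, 1 ≤ r → deriv (deriv Q₁) r + (2 / r) * deriv Q₁ r =
      ((ℓ : ℝ) * ((ℓ : ℝ) + 1) / (2 * r ^ 2)) * Real.sin (2 * Q₁ r))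
    (hode₂ : ∀ r : ℝ, 1 ≤ r → deriv (deriv Q₂) r + (2 / r) * deriv Q₂ r =
      ((ℓ : ℝ) * ((ℓ : ℝ) + 1) / (2 * r ^ 2)) * Real.sin (2 * Q₂ r))
    (ha₁ : (fun r => Q₁ r - a r) =O[atTop] fun r : ℝ => (r ^ (3 * (ℓ + 1)))⁻¹)
    (ha₂ : (fun r => Q₂ r - a r) =O[atTop] fun r : ℝ => (r ^ (3 * (ℓ + 1)))⁻¹) :
    Set.EqOn Q₁ Q₂ (Set.Ici 1) := by
  obtain ⟨ψ₁, h₁⟩ := exists_hasDerivAt_comp_inv hQ₁ hode₁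
  obtain ⟨ψ₂, h₂⟩ := exists_hasDerivAt_comp_inv hQ₂ hode₂
  have hO : (fun r => Q₁ r - Q₂ r) =O[atTop] fun r : ℝ => (r ^ (3 * (ℓ + 1)))⁻¹ := by
    simpa using ha₁.sub ha₂
  obtain ⟨M, hM⟩ := exists_bound_mul_pow_of_isBigO (hQ₁.continuousOn.sub hQ₂.continuousOn) hO
  have hzero := eqOn_zero_of_abs_deriv2_le (c := (ℓ : ℝ) * (ℓ + 1)) (M := M) (p := 3 * ℓ + 1)
    (fun x hx => (h₁ x hx).1.fun_sub (h₂ x hx).1) (fun x hx => (h₁ x hx).2.fun_sub (h₂ x hx).2)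
    (fun x hx => ?_) (by positivity) (by push_cast; nlinarith [(ℓ.cast_nonneg : (0 : ℝ) ≤ ℓ)])
    (fun x hx => ?_)
  · refine Set.EqOn.of_subset_closure (s := Set.Ioi 1) (fun r hr => ?_) hQ₁.continuousOn
      hQ₂.continuousOn Set.Ioi_subset_Ici_self (closure_Ioi (1 : ℝ)).ge
    have := hzero r⁻¹ ⟨inv_pos.2 (one_pos.trans hr), inv_lt_one_of_one_lt₀ hr⟩
    rw [inv_inv] at this
    exact sub_eq_zero.1 this
  · have hx2 : 0 < x ^ 2 := pow_pos hx.1 2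
    have hsin : |Real.sin (2 * Q₁ x⁻¹) - Real.sin (2 * Q₂ x⁻¹)| ≤ 2 * |Q₁ x⁻¹ - Q₂ x⁻¹| := by
      refine (Real.abs_sin_sub_sin_le _ _).trans_eq ?_
      rw [← mul_sub, abs_mul, abs_two]
    rw [← sub_div, ← mul_sub, abs_div, abs_of_pos hx2, mul_div_cancel₀ _ hx2.ne', abs_mul,
      abs_of_nonneg (by positivity : 0 ≤ (ℓ : ℝ) * (ℓ + 1) / 2)]
    calc _ ≤ (ℓ : ℝ) * (ℓ + 1) / 2 * (2 * |Q₁ x⁻¹ - Q₂ x⁻¹|) :=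
          mul_le_mul_of_nonneg_left hsin (by positivity)
      _ = _ := by ring
  · have := hM x⁻¹ ((one_le_inv₀ hx.1).2 hx.2.le)
    rwa [inv_pow, inv_inv, show 3 * (ℓ + 1) = 3 * ℓ + 1 + 2 by ring] at this

theorem rpow_neg_three_mul_eventuallyEq (ℓ : ℕ) :
    (fun r : ℝ => r ^ (-(3 * ((ℓ : ℝ) + 1)))) =ᶠ[atTop] fun r : ℝ => (r ^ (3 * (ℓ + 1)))⁻¹ := by
  filter_upwards [eventually_ge_atTop 0] with r hr
  rw [Real.rpow_neg hr, ← Real.rpow_natCast]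
  push_cast
  rfl

theorem exists_exterior_solution (n : ℕ) {ℓ : ℕ} (hℓ : 0 < ℓ) (α : ℝ) :
    ∃ Q : ℝ → ℝ, ContDiffOn ℝ 2 Q (Set.Ici 1) ∧
      (∀ r : ℝ, 1 ≤ r → deriv (deriv Q) r + (2 / r) * deriv Q r =
        ((ℓ : ℝ) * ((ℓ : ℝ) + 1) / (2 * r ^ 2)) * Real.sin (2 * Q r)) ∧
      (fun r : ℝ => Q r - ((n : ℝ) * Real.pi - α / r ^ (ℓ + 1))) =O[atTop]
        (fun r : ℝ => (r ^ (3 * (ℓ + 1)))⁻¹) ∧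
      (α = 0 → ∀ r : ℝ, 1 ≤ r → Q r = (n : ℝ) * Real.pi) := by
  obtain ⟨ψ, ψ', M, hψ, hψ', hM, h0⟩ := exists_inverted_solution hℓ α
  have hsin (t : ℝ) : Real.sin (2 * (n * Real.pi + t)) = Real.sin (2 * t) := by
    rw [← Real.sin_add_nat_mul_two_pi (2 * t) n]
    ring_nf
  set Q : ℝ → ℝ := fun r => n * Real.pi + ψ r⁻¹ with hQ
  set Q' : ℝ → ℝ := fun r => -ψ' r⁻¹ / r ^ 2 with hQ'
  have hd (r : ℝ) (hr : r ∈ Set.Ioi (0 : ℝ)) : HasDerivAt Q (Q' r) r :=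
    ((hψ r⁻¹ (inv_pos.2 hr)).comp_inv (ne_of_gt hr)).const_add _
  have hd' (r : ℝ) (hr : r ∈ Set.Ioi (0 : ℝ)) : HasDerivAt Q'
      ((ℓ : ℝ) * ((ℓ : ℝ) + 1) / (2 * r ^ 2) * Real.sin (2 * Q r) - 2 / r * Q' r) r := by
    have hr0 : r ≠ 0 := ne_of_gt hr
    refine ((hψ' r⁻¹ (inv_pos.2 hr)).deriv_comp_inv hr0).congr_deriv ?_
    simp only [hQ, hQ', hsin]
    field_simp
    ring
  have hne (r : ℝ) (hr : r ∈ Set.Ioi (0 : ℝ)) : r ≠ 0 := ne_of_gt hr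
  have hcQ : ContinuousOn Q (Set.Ioi 0) := fun r hr => (hd r hr).continuousAt.continuousWithinAt
  have hcQ' : ContinuousOn Q' (Set.Ioi 0) := fun r hr => (hd' r hr).continuousAt.continuousWithinAt
  refine ⟨Q, ?_, fun r hr => ?_, ?_, fun hα r hr => ?_⟩
  · refine (contDiffOn_two_of_hasDerivAt isOpen_Ioi hd hd' ?_).mono
      (Set.Ici_subset_Ioi.2 one_pos)
    refine ContinuousOn.sub (ContinuousOn.mul (ContinuousOn.div (by fun_prop) (by fun_prop)
      fun r hr => ?_) (by fun_prop)) (ContinuousOn.mul (ContinuousOn.div (by fun_prop)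
      (by fun_prop) hne) hcQ')
    have := hne r hr
    positivity
  · have hr0 : r ∈ Set.Ioi (0 : ℝ) := one_pos.trans_le hr
    have hderiv : deriv Q =ᶠ[𝓝 r] Q' := by
      filter_upwards [Ioi_mem_nhds hr0] with t ht using (hd t ht).deriv
    rw [hderiv.deriv_eq, hderiv.eq_of_nhds, (hd' r hr0).deriv, sub_add_cancel]
  · refine IsBigO.of_bound M ?_
    filter_upwards [eventually_ge_atTop 1] with r hr
    have hr0 : 0 < r := one_pos.trans_le hr
    have h := hM r⁻¹ ⟨inv_nonneg.2 hr0.le, inv_le_one_of_one_le₀ hr⟩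
    rw [inv_pow, inv_pow] at h
    rw [Real.norm_of_nonneg (by positivity : 0 ≤ (r ^ (3 * (ℓ + 1)))⁻¹), Real.norm_eq_abs]
    convert h using 2
    simp only [hQ]
    ring
  · simp [hQ, h0 hα r⁻¹ (inv_nonneg.2 (zero_le_one.trans hr))]

/-- Existence and uniqueness of exterior harmonic maps with prescribed asymptotics: for
`ℓ ≥ 1`, `n ∈ ℕ`, and `α ∈ ℝ`, there is a unique (on `[1,∞)`) C² solution `Q` of
`Q'' + (2/r) Q' = (ℓ(ℓ+1)/(2r²)) sin(2Q)` with
`Q r = nπ - α/r^(ℓ+1) + O(r^(-3(ℓ+1)))` as `r → ∞`; the error vanishes when `α = 0`. -/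
theorem exterior_harmonic_map_exists_unique (ℓ n : ℕ) (hℓ : 0 < ℓ) (α : ℝ) :
    ∃ Q : ℝ → ℝ,
      (ContDiffOn ℝ 2 Q (Set.Ici 1) ∧
        (∀ r : ℝ, 1 ≤ r →
          deriv (deriv Q) r + (2 / r) * deriv Q r =
            ((ℓ : ℝ) * ((ℓ : ℝ) + 1) / (2 * r ^ 2)) * Real.sin (2 * Q r)) ∧
        (fun r : ℝ => Q r - ((n : ℝ) * Real.pi - α / r ^ (ℓ + 1))) =O[atTop]
          (fun r : ℝ => r ^ (-(3 * ((ℓ : ℝ) + 1)))) ∧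
        (α = 0 → ∀ r : ℝ, 1 ≤ r → Q r = (n : ℝ) * Real.pi)) ∧
      ∀ Q' : ℝ → ℝ,
        (ContDiffOn ℝ 2 Q' (Set.Ici 1) ∧
          (∀ r : ℝ, 1 ≤ r →
            deriv (deriv Q') r + (2 / r) * deriv Q' r =
              ((ℓ : ℝ) * ((ℓ : ℝ) + 1) / (2 * r ^ 2)) * Real.sin (2 * Q' r)) ∧
          (fun r : ℝ => Q' r - ((n : ℝ) * Real.pi - α / r ^ (ℓ + 1))) =O[atTop]
            (fun r : ℝ => r ^ (-(3 * ((ℓ : ℝ) + 1))))) →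
        Set.EqOn Q Q' (Set.Ici 1) := by
  simp only [isBigO_congr EventuallyEq.rfl (rpow_neg_three_mul_eventuallyEq ℓ)]
  obtain ⟨Q, hQ, hode, hasymp, hzero⟩ := exists_exterior_solution n hℓ α
  exact ⟨Q, ⟨hQ, hode, hasymp, hzero⟩, fun Q' ⟨hQ', hode', hasymp'⟩ =>
    eqOn_of_exterior_equation hQ hQ' hode hode' hasymp hasymp'⟩
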